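/- Let W_N = Σ_{m=1}^N 2^m B_{m,N} for N ≥ 1. Then W_N · 2N / 4^N → 1 as N → ∞; that is, W_N = (1/(2N)) · 4^N · (1 + o(1)). -/

import Mathlib

open scoped Real BigOperators Topology

/-- The generating functions `X_m` of rooted planar trees of height at most `m`:
`X_0 = 0`, `X_1(g) = g`, `X_m(g) = g/(1 - X_{m-1}(g))`. -/
noncomputable def Xc : ℕ → ℂ → ℂ
  | 0, _ => 0
  | (m + 1), g => g / (1 - Xc m g)

/-- `Y_m(g) = ∏_{k=1}^m X_k(g)`, the generating function of one-sided trees of height `m`. -/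
noncomputable def Yc (m : ℕ) (g : ℂ) : ℂ := ∏ k ∈ Finset.Icc 1 m, Xc k g

/-- `B_{m,N}`, the `N`-th Taylor coefficient of `Y_m` at `0`. -/
noncomputable def Bcoef (m N : ℕ) : ℂ := iteratedDeriv N (Yc m) 0 / (N.factorial : ℂ)

/-- The partition function at the critical coupling `μ₀ = −ln 2`:
`W_N = Σ_{m=1}^N 2^m B_{m,N}`. -/
noncomputable def Wcrit (N : ℕ) : ℂ :=
  ∑ m ∈ Finset.Icc 1 N, (2 : ℂ) ^ m * Bcoef m N

/-!
`Y_m` is, up to a power of `g`, the corner entry of the resolvent of the path on `m` vertices, so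
diagonalising the path by sines writes `2 ^ m B_{m,N} · 2N / 4 ^ N`, with `M = m + 1`, as `N / M`
times an alternating sum of `sin² θ cos ^ (2N - M) θ` over the `2 M` angles `θ = π k / M`. The
heights that matter are `M ≈ t √N`, where `√N` times this contribution converges to
`4 / t · ∑_{j ≥ 1} (-1) ^ (j-1) (π j / t)² exp (-(π j / t)²)`, which is the derivative in `t` of
`1 - ∑_{n ∈ ℤ} (-1) ^ n exp (-(π n / t)²)`. By the functional equation of the theta function this
primitive goes from `0` to `1` on `(0, ∞)`, so the limit of the sum over `M` is `1` once the
contributions are dominated. The Gaussian decay of the terms gives `O(M / N)`, good for `M ≲ √N`;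
cancellation in the alternating sum, estimated through the second derivative of
`sin² cos ^ (2N - M)`, gives `O(√N / M²)`, good for `M ≳ √N`.
-/

namespace OneSidedTree

open Filter MeasureTheory

/-! ### Discrete sine orthogonality -/

/-- The angle `θ_k = π k / M`, the `k`-th of `2 M` equispaced points on the circle. -/
noncomputable def node (M k : ℕ) : ℝ := π * k / M

/-- `(1/M) ∑_k sin θ_k sin (a θ_k) φ(2 cos θ_k)` over the `2 M` nodes `θ_k`: the matrix entry
`⟨e_1, φ(J) e_a⟩` of the path adjacency matrix `J` on `M - 1` vertices, diagonalised by sines. -/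
noncomputable def sinePairing (M a : ℕ) (φ : ℝ → ℂ) : ℂ :=
  1 / M * ∑ k ∈ Finset.range (2 * M),
    (Real.sin (node M k) * Real.sin (a * node M k) : ℝ) * φ (2 * Real.cos (node M k))

lemma mul_node {M : ℕ} (hM : M ≠ 0) (k : ℕ) : M * node M k = k * π := by
  unfold node
  field_simp

lemma sum_cos_mul_node {M b : ℕ} (hb : b ≠ 0) (hbM : b < 2 * M) :
    ∑ k ∈ Finset.range (2 * M), Real.cos (b * node M k) = 0 := by
  have hM : (M : ℂ) ≠ 0 := by exact_mod_cast (by omega : M ≠ 0)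
  set ζ : ℂ := Complex.exp (2 * π * Complex.I / ((2 * M : ℕ) : ℂ)) with hζ
  have hprim : IsPrimitiveRoot ζ (2 * M) := Complex.isPrimitiveRoot_exp _ (by omega)
  have hgeom : ∑ k ∈ Finset.range (2 * M), (ζ ^ b) ^ k = 0 := by
    refine (mul_eq_zero.mp ?_).resolve_left
      (sub_ne_zero.mpr (hprim.pow_ne_one_of_pos_of_lt hb hbM).symm)
    rw [mul_neg_geom_sum, ← pow_mul, mul_comm b, pow_mul, hprim.pow_eq_one, one_pow, sub_self]
  have hcos (k : ℕ) : Real.cos (b * node M k) = ((ζ ^ b) ^ k).re := by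
    rw [hζ, ← Complex.exp_nat_mul, ← Complex.exp_nat_mul, ← Complex.exp_ofReal_mul_I_re]
    congr 2
    push_cast [node]
    field_simp
  simp_rw [hcos, ← Complex.re_sum, hgeom, Complex.zero_re]

lemma sinePairing_congr {M a : ℕ} {φ ψ : ℝ → ℂ}
    (h : ∀ θ : ℝ, φ (2 * Real.cos θ) = ψ (2 * Real.cos θ)) :
    sinePairing M a φ = sinePairing M a ψ := by
  simp only [sinePairing, h]

lemma sinePairing_add (M a : ℕ) (φ ψ : ℝ → ℂ) :
    sinePairing M a (fun x => φ x + ψ x) = sinePairing M a φ + sinePairing M a ψ := by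
  simp only [sinePairing, mul_add, Finset.sum_add_distrib]

lemma sinePairing_const_mul (M a : ℕ) (c : ℂ) (φ : ℝ → ℂ) :
    sinePairing M a (fun x => c * φ x) = c * sinePairing M a φ := by
  simp only [sinePairing, Finset.mul_sum]
  exact Finset.sum_congr rfl fun k _ => by ring

lemma hasSum_sinePairing {M a : ℕ} {f : ℕ → ℝ → ℂ} {φ : ℝ → ℂ}
    (h : ∀ θ : ℝ, HasSum (fun j => f j (2 * Real.cos θ)) (φ (2 * Real.cos θ))) :
    HasSum (fun j => sinePairing M a (f j)) (sinePairing M a φ) :=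
  (hasSum_sum fun k _ => (h (node M k)).mul_left _).mul_left _

lemma sinePairing_zero (M : ℕ) (φ : ℝ → ℂ) : sinePairing M 0 φ = 0 := by
  simp [sinePairing]

lemma sinePairing_self (M : ℕ) (φ : ℝ → ℂ) : sinePairing M M φ = 0 := by
  rcases eq_or_ne M 0 with rfl | hM
  · simp [sinePairing]
  · simp [sinePairing, mul_node hM, Real.sin_nat_mul_pi]

lemma sinePairing_succ_mul (M a : ℕ) (φ : ℝ → ℂ) :
    sinePairing M (a + 1) (fun x => x * φ x) = sinePairing M a φ + sinePairing M (a + 2) φ := by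
  have hsin (θ : ℝ) :
      Real.sin ((a + 1 : ℕ) * θ) * (2 * Real.cos θ) =
        Real.sin (a * θ) + Real.sin ((a + 2 : ℕ) * θ) := by
    rw [show (a : ℝ) * θ = (a + 1 : ℕ) * θ - θ by push_cast; ring,
      show ((a + 2 : ℕ) : ℝ) * θ = (a + 1 : ℕ) * θ + θ by push_cast; ring,
      Real.sin_sub, Real.sin_add]
    ring
  simp only [sinePairing]
  rw [← mul_add, ← Finset.sum_add_distrib]
  refine congrArg _ (Finset.sum_congr rfl fun k _ => ?_)
  rw [← add_mul, ← Complex.ofReal_add, ← mul_add, ← hsin]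
  push_cast
  ring

lemma sinePairing_one {M b : ℕ} (hb : b + 2 < 2 * M) :
    sinePairing M (b + 1) (fun _ => 1) = if b = 0 then 1 else 0 := by
  have hsin (θ : ℝ) : Real.sin θ * Real.sin ((b + 1 : ℕ) * θ) =
      (Real.cos (b * θ) - Real.cos ((b + 2 : ℕ) * θ)) / 2 := by
    rw [show (b : ℝ) * θ = (b + 1 : ℕ) * θ - θ by push_cast; ring,
      show ((b + 2 : ℕ) : ℝ) * θ = (b + 1 : ℕ) * θ + θ by push_cast; ring,
      Real.cos_sub, Real.cos_add]
    ring
  have hM : (M : ℂ) ≠ 0 := by exact_mod_cast (by omega : M ≠ 0)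
  simp only [sinePairing, hsin, mul_one]
  rw [← Complex.ofReal_sum, ← Finset.sum_div, Finset.sum_sub_distrib,
    sum_cos_mul_node (b := b + 2) (by omega) hb]
  split_ifs with h
  · simp [h, hM]
  · simp [sum_cos_mul_node h (show b < 2 * M by omega)]

lemma sinePairing_pow_eq_zero {M a l : ℕ} (hla : l + 1 < a) (haM : a + l + 1 < 2 * M) :
    sinePairing M a (fun x => (x : ℂ) ^ l) = 0 := by
  induction l generalizing a with
  | zero =>
    obtain ⟨b, rfl⟩ : ∃ b, a = b + 1 := ⟨a - 1, by omega⟩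
    simp only [pow_zero]
    rw [sinePairing_one (by omega), if_neg (by omega)]
  | succ l ih =>
    obtain ⟨b, rfl⟩ : ∃ b, a = b + 1 := ⟨a - 1, by omega⟩
    simp only [pow_succ']
    rw [sinePairing_succ_mul, ih (by omega) (by omega), ih (by omega) (by omega), add_zero]

/-! ### The generating functions `X_m` and `Y_m` -/

/-- The resolvent entry `⟨e_1, J ^ a (1 - g J²)⁻¹ e_{a+1}⟩` of the path adjacency matrix `J` on
`M - 1` vertices. -/
noncomputable def resolvent (M : ℕ) (g : ℂ) (a : ℕ) : ℂ :=
  sinePairing M (a + 1) (fun x => x ^ a / (1 - g * x ^ 2))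

lemma norm_mul_two_cos_sq_lt_one {g : ℂ} (hg : ‖g‖ < 1 / 4) (θ : ℝ) :
    ‖g * ((2 * Real.cos θ : ℝ) : ℂ) ^ 2‖ < 1 := by
  rw [norm_mul, norm_pow, Complex.norm_real, Real.norm_eq_abs, sq_abs]
  nlinarith [norm_nonneg g, Real.cos_sq_le_one θ]

lemma pow_div_one_sub_eq {g : ℂ} (hg : ‖g‖ < 1 / 4) (a : ℕ) (θ : ℝ) :
    ((2 * Real.cos θ : ℝ) : ℂ) ^ a / (1 - g * ((2 * Real.cos θ : ℝ) : ℂ) ^ 2) =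
      ((2 * Real.cos θ : ℝ) : ℂ) ^ a + g * (((2 * Real.cos θ : ℝ) : ℂ) ^ (a + 2) /
        (1 - g * ((2 * Real.cos θ : ℝ) : ℂ) ^ 2)) := by
  have hden : 1 - g * ((2 * Real.cos θ : ℝ) : ℂ) ^ 2 ≠ 0 := fun h => by
    have := norm_mul_two_cos_sq_lt_one hg θ
    rw [← sub_eq_zero.mp h, norm_one] at this
    exact lt_irrefl _ this
  field_simp
  ring

lemma sinePairing_pow_div_one_sub {g : ℂ} (hg : ‖g‖ < 1 / 4) (M a b : ℕ) :
    sinePairing M b (fun x => x ^ a / (1 - g * x ^ 2)) =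
      sinePairing M b (fun x => (x : ℂ) ^ a) +
        g * sinePairing M b (fun x => x ^ (a + 2) / (1 - g * x ^ 2)) := by
  rw [← sinePairing_const_mul, ← sinePairing_add]
  exact sinePairing_congr (pow_div_one_sub_eq hg a)

lemma sinePairing_pow_succ_div (M a b : ℕ) (g : ℂ) :
    sinePairing M (b + 1) (fun x => x ^ (a + 1) / (1 - g * x ^ 2)) =
      sinePairing M b (fun x => x ^ a / (1 - g * x ^ 2)) +
        sinePairing M (b + 2) (fun x => x ^ a / (1 - g * x ^ 2)) := by
  simp_rw [← sinePairing_succ_mul, pow_succ', mul_div_assoc]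

lemma resolvent_eq_sub {g : ℂ} (hg : ‖g‖ < 1 / 4) {M a : ℕ} (ha : a + 2 < M) :
    resolvent M g a = resolvent M g (a + 1) - g * resolvent M g (a + 2) := by
  have hstep := sinePairing_pow_succ_div M a (a + 1) g
  rw [sinePairing_pow_div_one_sub hg M a (a + 3),
    sinePairing_pow_eq_zero (by omega) (by omega), zero_add] at hstep
  simp only [resolvent]
  linear_combination -hstep

lemma resolvent_zero_eq {g : ℂ} (hg : ‖g‖ < 1 / 4) {M : ℕ} (hM : 2 ≤ M) :
    resolvent M g 0 = 1 + g * resolvent M g 1 := by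
  have hone := sinePairing_one (M := M) (b := 0) (by omega)
  simp only [resolvent]
  rw [sinePairing_pow_div_one_sub hg M 0 1, sinePairing_pow_succ_div M 1 0 g, sinePairing_zero,
    zero_add]
  simpa using hone

lemma resolvent_pred_eq_zero (m : ℕ) (g : ℂ) : resolvent (m + 1) g m = 0 :=
  sinePairing_self _ _

lemma norm_Xc_le_half {g : ℂ} (hg : ‖g‖ < 1 / 4) (m : ℕ) : ‖Xc m g‖ ≤ 1 / 2 := by
  induction m with
  | zero => simp [Xc]
  | succ m ih =>
    have hden : 1 / 2 ≤ ‖1 - Xc m g‖ := by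
      have := norm_sub_norm_le (1 : ℂ) (Xc m g)
      rw [norm_one] at this
      linarith
    rw [Xc, norm_div, div_le_iff₀ (by linarith)]
    linarith

lemma one_sub_Xc_ne_zero {g : ℂ} (hg : ‖g‖ < 1 / 4) (m : ℕ) : 1 - Xc m g ≠ 0 := fun h => by
  have := norm_Xc_le_half hg m
  rw [← sub_eq_zero.mp h, norm_one] at this
  norm_num at this

lemma mul_resolvent_succ_eq {g : ℂ} (hg : ‖g‖ < 1 / 4) {m a j : ℕ} (haj : a + j + 1 = m) :
    g * resolvent (m + 1) g (a + 1) = Xc j g * resolvent (m + 1) g a := by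
  induction j generalizing a with
  | zero =>
    obtain rfl : m = a + 1 := by omega
    rw [resolvent_pred_eq_zero, Xc, mul_zero, zero_mul]
  | succ j ih =>
    have hden := one_sub_Xc_ne_zero hg j
    rw [resolvent_eq_sub hg (by omega : a + 2 < m + 1), ih (a := a + 1) (by omega), Xc]
    field_simp

lemma Yc_succ (m : ℕ) (g : ℂ) : Yc (m + 1) g = Yc m g * Xc (m + 1) g :=
  Finset.prod_Icc_succ_top (by omega) _

lemma Yc_mul_resolvent {g : ℂ} (hg : ‖g‖ < 1 / 4) {m a j : ℕ} (haj : a + j = m) :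
    Yc j g * resolvent (m + 2) g a = g ^ j * resolvent (m + 2) g m := by
  induction j generalizing a with
  | zero => simp [Yc, ← haj]
  | succ j ih =>
    rw [Yc_succ, mul_assoc, ← mul_resolvent_succ_eq hg (m := m + 1) (by omega), mul_left_comm,
      ih (by omega), pow_succ', mul_assoc]

lemma Xc_succ_eq_mul_resolvent {g : ℂ} (hg : ‖g‖ < 1 / 4) (m : ℕ) :
    Xc (m + 1) g = g * resolvent (m + 2) g 0 := by
  have hzero := resolvent_zero_eq hg (show 2 ≤ m + 2 by omega)
  rw [mul_resolvent_succ_eq hg (a := 0) (j := m) (by omega)] at hzero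
  rw [Xc, div_eq_iff (one_sub_Xc_ne_zero hg m)]
  linear_combination -g * hzero

lemma Yc_succ_eq_pow_mul_resolvent {g : ℂ} (hg : ‖g‖ < 1 / 4) (m : ℕ) :
    Yc (m + 1) g = g ^ (m + 1) * resolvent (m + 2) g m := by
  rw [Yc_succ, Xc_succ_eq_mul_resolvent hg, mul_left_comm,
    Yc_mul_resolvent hg (zero_add m), pow_succ', mul_assoc]

lemma hasSum_resolvent {g : ℂ} (hg : ‖g‖ < 1 / 4) (M a : ℕ) :
    HasSum (fun j => g ^ j * sinePairing M (a + 1) (fun x => (x : ℂ) ^ (a + 2 * j)))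
      (resolvent M g a) := by
  simp_rw [← sinePairing_const_mul]
  refine hasSum_sinePairing fun θ =>
    ((hasSum_geometric_of_norm_lt_one (norm_mul_two_cos_sq_lt_one hg θ)).mul_left
      (((2 * Real.cos θ : ℝ) : ℂ) ^ a)).congr_fun fun j => ?_
  ring

lemma hasSum_Yc {g : ℂ} (hg : ‖g‖ < 1 / 4) {m : ℕ} (hm : 1 ≤ m) :
    HasSum (fun N => g ^ N *
        if N < m then 0 else sinePairing (m + 1) m (fun x => (x : ℂ) ^ (2 * N - (m + 1))))
      (Yc m g) := by
  obtain ⟨n, rfl⟩ : ∃ n, m = n + 1 := ⟨m - 1, by omega⟩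
  rw [← hasSum_nat_add_iff' (n + 1), Finset.sum_eq_zero, sub_zero,
    Yc_succ_eq_pow_mul_resolvent hg]
  · refine ((hasSum_resolvent hg (n + 2) n).mul_left (g ^ (n + 1))).congr_fun fun j => ?_
    rw [if_neg (by omega), show 2 * (j + (n + 1)) - (n + 1 + 1) = n + 2 * j by omega]
    ring
  · intro i hi
    rw [if_pos (Finset.mem_range.mp hi), mul_zero]

lemma iteratedDeriv_div_factorial_of_hasSum {f : ℂ → ℂ} {b : ℕ → ℂ} {r : ℝ} (hr : 0 < r)
    (h : ∀ z : ℂ, ‖z‖ < r → HasSum (fun n => z ^ n * b n) (f z)) (n : ℕ) :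
    iteratedDeriv n f 0 / (n.factorial : ℂ) = b n := by
  have hseries : HasFPowerSeriesAt f (FormalMultilinearSeries.ofScalars ℂ b) 0 := by
    rw [hasFPowerSeriesAt_iff]
    filter_upwards [Metric.ball_mem_nhds (0 : ℂ) hr] with z hz
    simpa using h z (mem_ball_zero_iff.mp hz)
  have hcoeff := congrArg (fun p => FormalMultilinearSeries.coeff p n)
    (hseries.eq_formalMultilinearSeries hseries.analyticAt.hasFPowerSeriesAt)
  simpa using hcoeff.symm

lemma Bcoef_eq_sinePairing {m N : ℕ} (hm : 1 ≤ m) (hN : m ≤ N) :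
    Bcoef m N = sinePairing (m + 1) m (fun x => (x : ℂ) ^ (2 * N - (m + 1))) := by
  rw [Bcoef, iteratedDeriv_div_factorial_of_hasSum (by norm_num) fun _ hg => hasSum_Yc hg hm,
    if_neg (by omega)]

/-! ### Reduction to alternating trigonometric sums -/

/-- The alternating sum `∑_k (-1) ^ (k+1) sin² θ_k cos ^ n θ_k` over the `2 M` nodes. -/
noncomputable def altSum (M n : ℕ) : ℝ :=
  ∑ k ∈ Finset.range (2 * M),
    (-1) ^ (k + 1) * (Real.sin (node M k) ^ 2 * Real.cos (node M k) ^ n)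

lemma sin_pred_mul_node (m k : ℕ) :
    Real.sin (m * node (m + 1) k) = (-1) ^ (k + 1) * Real.sin (node (m + 1) k) := by
  have hnode := mul_node m.succ_ne_zero k
  push_cast at hnode
  rw [show (m : ℝ) * node (m + 1) k = k * π - node (m + 1) k by linear_combination hnode,
    Real.sin_sub, Real.sin_nat_mul_pi, Real.cos_nat_mul_pi]
  ring

lemma sinePairing_pow_eq_altSum (m n : ℕ) :
    sinePairing (m + 1) m (fun x => (x : ℂ) ^ n) =
      ((2 ^ n / ((m + 1 : ℕ) : ℝ) * altSum (m + 1) n : ℝ) : ℂ) := by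
  simp only [sinePairing, altSum, sin_pred_mul_node]
  push_cast
  rw [Finset.mul_sum, Finset.mul_sum]
  exact Finset.sum_congr rfl fun k _ => by ring

/-- The contribution `2 ^ m B_{m,N} · 2N / 4 ^ N` of the height `m = M - 1` to
`W_N · 2N / 4 ^ N`. -/
noncomputable def normalizedTerm (N M : ℕ) : ℝ := N / M * altSum M (2 * N - M)

lemma Wcrit_mul_div_eq_sum_normalizedTerm (N : ℕ) :
    Wcrit N * (2 * N) / 4 ^ N = ((∑ M ∈ Finset.Icc 2 (N + 1), normalizedTerm N M : ℝ) : ℂ) := by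
  rw [← Finset.map_add_right_Icc 1 N 1, Finset.sum_map, Wcrit, Finset.sum_mul, Finset.sum_div,
    Complex.ofReal_sum]
  refine Finset.sum_congr rfl fun m hm => ?_
  obtain ⟨hm, hmN⟩ := Finset.mem_Icc.mp hm
  rw [Bcoef_eq_sinePairing hm hmN, sinePairing_pow_eq_altSum]
  have hfour : (4 : ℂ) ^ N = 2 ^ m * 2 * 2 ^ (2 * N - (m + 1)) := by
    rw [← pow_succ, ← pow_add, show m + 1 + (2 * N - (m + 1)) = 2 * N by omega, pow_mul]
    norm_num
  have hm0 : ((m : ℂ) + 1) ≠ 0 := by exact_mod_cast m.succ_ne_zero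
  rw [hfour, addRightEmbedding_apply, normalizedTerm]
  push_cast
  field_simp

/-! ### Folding, and the bound for small `M` -/

lemma sum_range_two_mul_of_periodic {M : ℕ} {f : ℕ → ℝ} (hper : ∀ k, f (M + k) = f k) :
    ∑ k ∈ Finset.range (2 * M), f k = 2 * ∑ k ∈ Finset.range M, f k := by
  simp only [two_mul, Finset.sum_range_add, hper]

lemma sum_range_eq_two_mul_sum_half {m : ℕ} {f : ℕ → ℝ}
    (hrefl : ∀ j < m, f (m - 1 - j) = f j) (hmid : ∀ j, 2 * j + 1 = m → f j = 0) :
    ∑ j ∈ Finset.range m, f j = 2 * ∑ j ∈ Finset.range m, if 2 * j + 1 < m then f j else 0 := by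
  have hsplit (j : ℕ) : f j = (if 2 * j + 1 < m then f j else 0) +
      if m < 2 * j + 1 then f j else 0 := by
    rcases lt_trichotomy (2 * j + 1) m with h | h | h
    · rw [if_pos h, if_neg (by omega), add_zero]
    · rw [if_neg (by omega), if_neg (by omega), hmid j h, add_zero]
    · rw [if_neg (by omega), if_pos h, zero_add]
  have hupper : ∑ j ∈ Finset.range m, (if m < 2 * j + 1 then f j else 0) =
      ∑ j ∈ Finset.range m, if 2 * j + 1 < m then f j else 0 := by
    rw [← Finset.sum_range_reflect]
    refine Finset.sum_congr rfl fun j hj => ?_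
    rw [Finset.mem_range] at hj
    rw [hrefl j hj]
    exact if_congr (by omega) rfl rfl
  rw [Finset.sum_congr rfl fun j _ => hsplit j, Finset.sum_add_distrib, hupper, two_mul]

lemma sum_range_two_mul_fold {M : ℕ} {f : ℕ → ℝ} (hper : ∀ k, f (M + k) = f k)
    (hrefl : ∀ k ≤ M, f (M - k) = f k) (hzero : f 0 = 0) (hmid : ∀ k, 2 * k = M → f k = 0) :
    ∑ k ∈ Finset.range (2 * M), f k =
      4 * ∑ j ∈ Finset.range (M - 1), if 2 * (j + 1) < M then f (j + 1) else 0 := by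
  rcases M with _ | m
  · simp
  rw [sum_range_two_mul_of_periodic hper, Finset.sum_range_succ', hzero, add_zero,
    sum_range_eq_two_mul_sum_half (f := fun j => f (j + 1)), ← mul_assoc]
  · rw [show (2 : ℝ) * 2 = 4 by norm_num, Nat.add_sub_cancel]
    refine congrArg _ (Finset.sum_congr rfl fun j _ => ?_)
    exact if_congr (by omega) rfl rfl
  · intro j hj
    rw [show m - 1 - j + 1 = m + 1 - (j + 1) by omega, hrefl _ (by omega)]
  · exact fun j hj => hmid _ (by omega)

/-- The contribution to `altSum M n` of the four nodes symmetric to `node M (j + 1)`. -/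
noncomputable def foldedTerm (M n j : ℕ) : ℝ :=
  if 2 * (j + 1) < M then
    4 * ((-1) ^ j * (Real.sin (node M (j + 1)) ^ 2 * Real.cos (node M (j + 1)) ^ n))
  else 0

lemma altSum_eq_sum_foldedTerm {M n : ℕ} (hn : n ≠ 0) (hMn : Even (M + n)) :
    altSum M n = ∑ j ∈ Finset.range (M - 1), foldedTerm M n j := by
  rcases eq_or_ne M 0 with rfl | hM
  · simp [altSum]
  have hsign : (-1 : ℝ) ^ M * (-1) ^ n = 1 := by rw [← pow_add, hMn.neg_one_pow]
  rw [altSum, sum_range_two_mul_fold, Finset.mul_sum]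
  · refine Finset.sum_congr rfl fun j _ => ?_
    rw [foldedTerm, mul_ite, mul_zero, add_assoc, pow_add, neg_one_sq, mul_one]
  · intro k
    have hnode : node M (M + k) = node M k + π := by
      simp only [node]; push_cast; field_simp; ring
    rw [hnode, Real.sin_add_pi, Real.cos_add_pi, neg_sq, neg_pow (Real.cos _), add_assoc, pow_add]
    linear_combination
      ((-1) ^ (k + 1) * Real.sin (node M k) ^ 2 * Real.cos (node M k) ^ n) * hsign
  · intro k hk
    have hnode : node M (M - k) = π - node M k := by
      simp only [node]; push_cast [hk]; field_simp
    have hpow : (-1 : ℝ) ^ (M - k + 1) = (-1) ^ M * (-1) ^ (k + 1) := by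
      rw [← pow_add, show M + (k + 1) = M - k + 1 + 2 * k by omega, pow_add _ _ (2 * k),
        pow_mul, neg_one_sq, one_pow, mul_one]
    rw [hnode, Real.sin_pi_sub, Real.cos_pi_sub, neg_pow (Real.cos _), hpow]
    linear_combination
      ((-1) ^ (k + 1) * Real.sin (node M k) ^ 2 * Real.cos (node M k) ^ n) * hsign
  · simp [node]
  · rintro k rfl
    have hnode : node (2 * k) k = π / 2 := by
      have : (k : ℝ) ≠ 0 := by exact_mod_cast (by omega : k ≠ 0)
      simp only [node]; push_cast; field_simp
    rw [hnode, Real.cos_pi_div_two, zero_pow hn, mul_zero, mul_zero]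

lemma hasSum_foldedTerm {M n : ℕ} (hn : n ≠ 0) (hMn : Even (M + n)) :
    HasSum (foldedTerm M n) (altSum M n) := by
  rw [altSum_eq_sum_foldedTerm hn hMn]
  refine hasSum_sum_of_ne_finset_zero fun j hj => if_neg ?_
  rw [Finset.mem_range] at hj
  omega

lemma exp_neg_le_two_div_sq {y : ℝ} (hy : 0 < y) : Real.exp (-y) ≤ 2 / y ^ 2 := by
  rw [Real.exp_neg, inv_le_comm₀ (Real.exp_pos _) (by positivity), inv_div]
  linarith [Real.quadratic_le_exp_of_nonneg hy.le]

lemma sin_sq_mul_cos_pow_le {θ : ℝ} (hθ : 0 < θ) (hθ' : θ ≤ π / 2) {n : ℕ} (hn : n ≠ 0) :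
    Real.sin θ ^ 2 * Real.cos θ ^ n ≤ π ^ 4 / (2 * n ^ 2 * θ ^ 2) := by
  have hcos_nonneg : 0 ≤ Real.cos θ := Real.cos_nonneg_of_mem_Icc ⟨by linarith, hθ'⟩
  have hcos_le : Real.cos θ ≤ Real.exp (-(2 / π ^ 2 * θ ^ 2)) := by
    have := Real.cos_le_one_sub_mul_cos_sq (x := θ) (by rw [abs_of_pos hθ]; linarith)
    linarith [Real.add_one_le_exp (-(2 / π ^ 2 * θ ^ 2))]
  have hsin : Real.sin θ ^ 2 ≤ θ ^ 2 :=
    pow_le_pow_left₀ (Real.sin_nonneg_of_nonneg_of_le_pi hθ.le (by linarith)) (Real.sin_le hθ.le) 2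
  have hpos : 0 < n * (2 / π ^ 2 * θ ^ 2) := by positivity
  calc Real.sin θ ^ 2 * Real.cos θ ^ n
      ≤ θ ^ 2 * Real.exp (-(2 / π ^ 2 * θ ^ 2)) ^ n := by gcongr
    _ = θ ^ 2 * Real.exp (-(n * (2 / π ^ 2 * θ ^ 2))) := by rw [← Real.exp_nat_mul, mul_neg]
    _ ≤ θ ^ 2 * (2 / (n * (2 / π ^ 2 * θ ^ 2)) ^ 2) := by
      gcongr
      exact exp_neg_le_two_div_sq hpos
    _ = π ^ 4 / (2 * n ^ 2 * θ ^ 2) := by field_simp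

lemma abs_foldedTerm_le {M n : ℕ} (hn : n ≠ 0) (j : ℕ) :
    |foldedTerm M n j| ≤ 2 * π ^ 2 * (M / n) ^ 2 * (1 / (j + 1 : ℕ) ^ 2) := by
  rw [foldedTerm]
  split_ifs with hj
  · have hM : (0 : ℝ) < M := by exact_mod_cast (by omega : 0 < M)
    have hpos : 0 < node M (j + 1) := by unfold node; positivity
    have hle : node M (j + 1) ≤ π / 2 := by
      have : 2 * ((j + 1 : ℕ) : ℝ) ≤ M := by exact_mod_cast hj.le
      rw [node, div_le_div_iff₀ hM two_pos]
      nlinarith [Real.pi_pos]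
    have hcos : 0 ≤ Real.cos (node M (j + 1)) := Real.cos_nonneg_of_mem_Icc ⟨by linarith, hle⟩
    rw [abs_mul, abs_mul, abs_neg_one_pow, one_mul, abs_of_nonneg (by positivity),
      abs_of_nonneg (by positivity)]
    calc 4 * (Real.sin (node M (j + 1)) ^ 2 * Real.cos (node M (j + 1)) ^ n)
        ≤ 4 * (π ^ 4 / (2 * n ^ 2 * node M (j + 1) ^ 2)) := by
          gcongr
          exact sin_sq_mul_cos_pow_le hpos hle hn
      _ = _ := by unfold node; field_simp; norm_num
  · rw [abs_zero]
    positivity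

lemma hasSum_one_div_succ_sq : HasSum (fun j : ℕ => 1 / ((j + 1 : ℕ) : ℝ) ^ 2) (π ^ 2 / 6) := by
  simpa using (hasSum_nat_add_iff' 1).mpr hasSum_zeta_two

lemma div_mul_sq_div_le {N M : ℕ} (hN : 2 ≤ N) (hM : M ≤ N + 1) :
    (N : ℝ) / M * ((M : ℝ) / (2 * N - M : ℕ)) ^ 2 ≤ 4 * (M / N) := by
  have hn : (N : ℝ) / 2 ≤ (2 * N - M : ℕ) := by
    rw [div_le_iff₀ two_pos]
    exact_mod_cast (by omega : N ≤ (2 * N - M) * 2)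
  rcases M.eq_zero_or_pos with rfl | hM0
  · simp
  calc (N : ℝ) / M * ((M : ℝ) / (2 * N - M : ℕ)) ^ 2 ≤ N / M * (M / (N / 2)) ^ 2 := by gcongr
    _ = 4 * ((M : ℝ) / N) := by field_simp; norm_num

lemma abs_div_mul_foldedTerm_le {N M : ℕ} (hN : 2 ≤ N) (hM : M ≤ N + 1) (j : ℕ) :
    |N / M * foldedTerm M (2 * N - M) j| ≤
      8 * π ^ 2 * ((M : ℝ) / N) * (1 / ((j + 1 : ℕ) : ℝ) ^ 2) := by
  rw [abs_mul, abs_of_nonneg (by positivity : (0 : ℝ) ≤ N / M)]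
  calc N / M * |foldedTerm M (2 * N - M) j|
      ≤ N / M * (2 * π ^ 2 * (M / (2 * N - M : ℕ)) ^ 2 * (1 / (j + 1 : ℕ) ^ 2)) := by
        gcongr
        exact abs_foldedTerm_le (by omega) j
    _ = 2 * π ^ 2 * (N / M * (M / (2 * N - M : ℕ)) ^ 2) * (1 / (j + 1 : ℕ) ^ 2) := by ring
    _ ≤ 2 * π ^ 2 * (4 * (M / N)) * (1 / (j + 1 : ℕ) ^ 2) := by
        gcongr 2 * π ^ 2 * ?_ * _
        exact div_mul_sq_div_le hN hM
    _ = 8 * π ^ 2 * ((M : ℝ) / N) * (1 / ((j + 1 : ℕ) : ℝ) ^ 2) := by ring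

lemma hasSum_normalizedTerm {N M : ℕ} (hN : 2 ≤ N) (hM : M ≤ N + 1) :
    HasSum (fun j => N / M * foldedTerm M (2 * N - M) j) (normalizedTerm N M) := by
  have heven : Even (M + (2 * N - M)) := by
    rw [Nat.add_sub_cancel' (by omega)]
    exact even_two_mul N
  exact (hasSum_foldedTerm (by omega) heven).mul_left _

lemma abs_normalizedTerm_le_div {N M : ℕ} (hN : 2 ≤ N) (hM : M ≤ N + 1) :
    |normalizedTerm N M| ≤ 4 * π ^ 4 / 3 * (M / N) := by
  have hbound := hasSum_one_div_succ_sq.mul_left (8 * π ^ 2 * ((M : ℝ) / N))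
  calc |normalizedTerm N M| ≤ 8 * π ^ 2 * (M / N) * (π ^ 2 / 6) :=
        (hasSum_normalizedTerm hN hM).norm_le_of_bounded hbound (abs_div_mul_foldedTerm_le hN hM)
    _ = 4 * π ^ 4 / 3 * (M / N) := by ring

/-! ### Alternating sums of smooth periodic functions, and the bound for large `M` -/

lemma sum_range_succ_eq_of_periodic {n : ℕ} {F : ℕ → ℝ} (hF : F n = F 0) :
    ∑ k ∈ Finset.range n, F (k + 1) = ∑ k ∈ Finset.range n, F k := by
  linarith [Finset.sum_range_succ F n, Finset.sum_range_succ' F n]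

lemma intervalIntegral_swap_of_continuous {f : ℝ → ℝ → ℝ} {a b c d : ℝ} (hab : a ≤ b)
    (hcd : c ≤ d) (hf : Continuous (Function.uncurry f)) :
    ∫ x in a..b, ∫ y in c..d, f x y = ∫ y in c..d, ∫ x in a..b, f x y := by
  have hint : IntegrableOn (Function.uncurry f) (Set.Ioc a b ×ˢ Set.Ioc c d) :=
    (hf.continuousOn.integrableOn_compact (isCompact_Icc.prod isCompact_Icc)).mono_set
      (Set.prod_mono Set.Ioc_subset_Icc_self Set.Ioc_subset_Icc_self)
  simp only [intervalIntegral.integral_of_le hab, intervalIntegral.integral_of_le hcd]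
  refine integral_integral_swap ?_
  rwa [Measure.prod_restrict]

section AlternatingSum

variable {f f' f'' : ℝ → ℝ} {M : ℕ} {h : ℝ}

lemma two_mul_alternating_sum_eq (hper : Function.Periodic f (2 * M * h)) :
    2 * ∑ k ∈ Finset.range (2 * M), (-1) ^ k * f (k * h) =
      ∑ k ∈ Finset.range (2 * M), (-1) ^ k * (f (k * h) - f (k * h + h)) := by
  have hend : (-1) ^ (2 * M) * f ((2 * M : ℕ) * h) = (-1) ^ 0 * f ((0 : ℕ) * h) := by
    have := hper 0
    rw [zero_add] at this
    push_cast
    rw [this, pow_mul, neg_one_sq, one_pow, pow_zero, zero_mul]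
  rw [two_mul]
  nth_rewrite 2 [← sum_range_succ_eq_of_periodic hend]
  rw [← Finset.sum_add_distrib]
  refine Finset.sum_congr rfl fun k _ => ?_
  rw [show ((k + 1 : ℕ) : ℝ) * h = k * h + h by push_cast; ring]
  ring

lemma abs_sub_le_integral_abs_deriv (hf : ∀ x, HasDerivAt f (f' x) x) (hf' : Continuous f')
    {a b : ℝ} (hab : a ≤ b) : |f b - f a| ≤ ∫ x in a..b, |f' x| := by
  rw [← intervalIntegral.integral_eq_sub_of_hasDerivAt (fun x _ => hf x)
    (hf'.intervalIntegrable a b)]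
  exact intervalIntegral.abs_integral_le_integral_abs hab

lemma abs_alternating_sum_le_integral_abs_deriv (hh : 0 ≤ h)
    (hper : Function.Periodic f (2 * M * h)) (hf : ∀ x, HasDerivAt f (f' x) x)
    (hf' : Continuous f') :
    2 * |∑ k ∈ Finset.range (2 * M), (-1) ^ k * f (k * h)| ≤ ∫ x in 0..2 * M * h, |f' x| := by
  calc 2 * |∑ k ∈ Finset.range (2 * M), (-1) ^ k * f (k * h)|
      = |∑ k ∈ Finset.range (2 * M), (-1) ^ k * (f (k * h) - f (k * h + h))| := by
        rw [← two_mul_alternating_sum_eq hper, abs_mul, abs_two]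
    _ ≤ ∑ k ∈ Finset.range (2 * M), ∫ x in (k : ℕ) * h..(k + 1 : ℕ) * h, |f' x| := by
        refine (Finset.abs_sum_le_sum_abs _ _).trans (Finset.sum_le_sum fun k _ => ?_)
        rw [abs_mul, abs_neg_one_pow, one_mul, abs_sub_comm,
          show ((k + 1 : ℕ) : ℝ) * h = k * h + h by push_cast; ring]
        exact abs_sub_le_integral_abs_deriv hf hf' (by linarith)
    _ = ∫ x in 0..2 * M * h, |f' x| := by
        rw [intervalIntegral.sum_integral_adjacent_intervals (a := fun k : ℕ => (k : ℝ) * h)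
          fun k _ => hf'.abs.intervalIntegrable _ _]
        simp

lemma integral_abs_shift_sub_le {T : ℝ} (hT : 0 ≤ T) (hh : 0 ≤ h)
    (hper : Function.Periodic f' T) (hf : ∀ x, HasDerivAt f (f' x) x) (hf' : Continuous f') :
    ∫ x in 0..T, |f x - f (x + h)| ≤ h * ∫ x in 0..T, |f' x| := by
  have hfc : Continuous f := continuous_iff_continuousAt.mpr fun x => (hf x).continuousAt
  have hslice (s : ℝ) : ∫ x in 0..T, |f' (x + s)| = ∫ x in 0..T, |f' x| := by
    have hperAbs : Function.Periodic (fun x => |f' x|) T := fun x => by simp only [hper x]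
    rw [intervalIntegral.integral_comp_add_right (fun x => |f' x|), zero_add, add_comm T,
      hperAbs.intervalIntegral_add_eq s 0, zero_add]
  calc ∫ x in 0..T, |f x - f (x + h)|
      ≤ ∫ x in 0..T, ∫ s in 0..h, |f' (x + s)| := by
        refine intervalIntegral.integral_mono_on hT
          (Continuous.intervalIntegrable (by fun_prop) _ _)
          (Continuous.intervalIntegrable (by fun_prop) _ _) fun x _ => ?_
        rw [abs_sub_comm, intervalIntegral.integral_comp_add_left (fun y => |f' y|), add_zero]
        exact abs_sub_le_integral_abs_deriv hf hf' (by linarith)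
    _ = ∫ s in 0..h, ∫ x in 0..T, |f' (x + s)| :=
        intervalIntegral_swap_of_continuous (f := fun x s => |f' (x + s)|) hT hh (by fun_prop)
    _ = h * ∫ x in 0..T, |f' x| := by
        simp only [hslice, intervalIntegral.integral_const, smul_eq_mul, sub_zero]

lemma abs_alternating_sum_le_integral_abs_deriv2 (hh : 0 ≤ h)
    (hper : Function.Periodic f (2 * M * h)) (hper'' : Function.Periodic f'' (2 * M * h))
    (hf : ∀ x, HasDerivAt f (f' x) x) (hf' : ∀ x, HasDerivAt f' (f'' x) x)
    (hf'' : Continuous f'') :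
    |∑ k ∈ Finset.range (2 * M), (-1) ^ k * f (k * h)| ≤
      h / 4 * ∫ x in 0..2 * M * h, |f'' x| := by
  have hf'c : Continuous f' := continuous_iff_continuousAt.mpr fun x => (hf' x).continuousAt
  have hdiff := abs_alternating_sum_le_integral_abs_deriv (f := fun x => f x - f (x + h)) (M := M)
    hh (fun x => by simp only [add_right_comm x _ h, hper _])
    (fun x => (hf x).sub ((hf (x + h)).comp_add_const x h)) (by fun_prop)
  rw [← two_mul_alternating_sum_eq hper, abs_mul, abs_two] at hdiff
  have hint := integral_abs_shift_sub_le (by positivity) hh hper'' hf' hf''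
  linarith

end AlternatingSum

lemma integral_exp_neg_mul_sin_sq_le {a : ℝ} (ha : 0 < a) :
    ∫ t in 0..2 * π, Real.exp (-(a * Real.sin t ^ 2)) ≤ π * √(π / a) := by
  set F : ℝ → ℝ := fun t => Real.exp (-(a * Real.sin t ^ 2)) with hF
  have hpi := Real.pi_pos
  have hcont : Continuous F := by fun_prop
  have hper : Function.Periodic F π := fun t => by simp [hF, Real.sin_add_pi]
  have hgauss := integrable_exp_neg_mul_sq (b := a * (2 / π) ^ 2) (by positivity)
  have hfold : ∫ t in 0..2 * π, F t = 2 * ∫ t in -(π / 2)..π / 2, F t := by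
    have h₁ := hper.intervalIntegral_add_eq 0 (-(π / 2))
    have h₂ := hper.intervalIntegral_add_eq π (-(π / 2))
    rw [show -(π / 2) + π = π / 2 by ring] at h₁ h₂
    rw [← intervalIntegral.integral_add_adjacent_intervals (b := π)
      (hcont.intervalIntegrable _ _) (hcont.intervalIntegrable _ _), two_mul π, h₂, two_mul, ← h₁,
      zero_add]
  have hjordan : ∀ t ∈ Set.Icc (-(π / 2)) (π / 2),
      F t ≤ Real.exp (-(a * (2 / π) ^ 2) * t ^ 2) := fun t ht => by
    have := pow_le_pow_left₀ (by positivity) (Real.mul_abs_le_abs_sin (abs_le.mpr ht)) 2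
    rw [mul_pow, sq_abs, sq_abs] at this
    refine Real.exp_le_exp.mpr ?_
    rw [neg_mul, neg_le_neg_iff, mul_assoc]
    gcongr
  calc ∫ t in 0..2 * π, F t
      ≤ 2 * ∫ t in -(π / 2)..π / 2, Real.exp (-(a * (2 / π) ^ 2) * t ^ 2) := by
        rw [hfold]
        gcongr
        exact intervalIntegral.integral_mono_on (by linarith) (hcont.intervalIntegrable _ _)
          hgauss.intervalIntegrable hjordan
    _ ≤ 2 * ∫ t, Real.exp (-(a * (2 / π) ^ 2) * t ^ 2) := by
        rw [intervalIntegral.integral_of_le (by linarith)]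
        exact mul_le_mul_of_nonneg_left (setIntegral_le_integral hgauss
          (Eventually.of_forall fun t => (Real.exp_pos _).le)) zero_le_two
    _ = π * √(π / a) := by
        rw [integral_gaussian, show π / (a * (2 / π) ^ 2) = (π / 2) ^ 2 * (π / a) by field_simp,
          Real.sqrt_mul (by positivity), Real.sqrt_sq (by positivity)]
        ring

/-- The second derivative of `sin² cos ^ (q+2)`. -/
noncomputable def sinSqCosPowDeriv2 (q : ℕ) (x : ℝ) : ℝ :=
  (2 * Real.cos x ^ 4 - (5 * q + 12) * Real.sin x ^ 2 * Real.cos x ^ 2 +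
    (q + 2) * (q + 1) * Real.sin x ^ 4) * Real.cos x ^ q

lemma hasDerivAt_sin_sq_mul_cos_pow (q : ℕ) (x : ℝ) :
    HasDerivAt (fun x => Real.sin x ^ 2 * Real.cos x ^ (q + 2))
      (2 * Real.sin x * Real.cos x ^ (q + 3) -
        (q + 2) * Real.sin x ^ 3 * Real.cos x ^ (q + 1)) x := by
  refine (((Real.hasDerivAt_sin x).fun_pow 2).fun_mul
    ((Real.hasDerivAt_cos x).fun_pow (q + 2))).congr_deriv ?_
  rw [show q + 2 - 1 = q + 1 by omega]
  push_cast
  ring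

lemma hasDerivAt_sinSqCosPow_deriv (q : ℕ) (x : ℝ) :
    HasDerivAt (fun x => 2 * Real.sin x * Real.cos x ^ (q + 3) -
        (q + 2) * Real.sin x ^ 3 * Real.cos x ^ (q + 1))
      (sinSqCosPowDeriv2 q x) x := by
  refine ((((Real.hasDerivAt_sin x).const_mul 2).fun_mul
    ((Real.hasDerivAt_cos x).fun_pow (q + 3))).fun_sub
      ((((Real.hasDerivAt_sin x).fun_pow 3).const_mul (q + 2 : ℝ)).fun_mul
        ((Real.hasDerivAt_cos x).fun_pow (q + 1)))).congr_deriv ?_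
  rw [sinSqCosPowDeriv2, show q + 3 - 1 = q + 2 by omega, Nat.add_sub_cancel]
  push_cast
  ring

lemma abs_cos_le_exp (x : ℝ) : |Real.cos x| ≤ Real.exp (-(Real.sin x ^ 2 / 2)) := by
  refine abs_le_of_sq_le_sq ?_ (Real.exp_pos _).le
  rw [← Real.exp_nat_mul, show ((2 : ℕ) : ℝ) * -(Real.sin x ^ 2 / 2) = -Real.sin x ^ 2 by
    push_cast; ring, Real.cos_sq']
  linarith [Real.add_one_le_exp (-Real.sin x ^ 2)]

lemma abs_sinSqCosPowDeriv2_le {q : ℕ} (hq : 1 ≤ q) (x : ℝ) :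
    |sinSqCosPowDeriv2 q x| ≤ 192 * Real.exp (-(q / 4 * Real.sin x ^ 2)) := by
  have hqR : (1 : ℝ) ≤ q := by exact_mod_cast hq
  set v : ℝ := q / 4 * Real.sin x ^ 2 with hv
  have hv0 : 0 ≤ v := by positivity
  have hcos := Real.cos_sq_le_one x
  have hpow : |Real.cos x| ^ q ≤ Real.exp (-(2 * v)) := by
    refine (pow_le_pow_left₀ (abs_nonneg _) (abs_cos_le_exp x) q).trans_eq ?_
    rw [← Real.exp_nat_mul, hv]
    ring_nf
  have hquartic : 2 * Real.cos x ^ 4 ≤ 2 := by nlinarith [sq_nonneg (Real.cos x)]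
  have hmixed : (5 * q + 12) * Real.sin x ^ 2 * Real.cos x ^ 2 ≤ 68 * v :=
    calc (5 * q + 12) * Real.sin x ^ 2 * Real.cos x ^ 2 ≤ (17 * q) * Real.sin x ^ 2 * 1 := by
          gcongr; linarith
      _ = 68 * v := by rw [hv]; ring
  have hsin : (q + 2) * (q + 1) * Real.sin x ^ 4 ≤ 96 * v ^ 2 :=
    calc (q + 2) * (q + 1) * Real.sin x ^ 4 ≤ (3 * q) * (2 * q) * Real.sin x ^ 4 := by
          gcongr <;> linarith
      _ = 96 * v ^ 2 := by rw [hv]; ring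
  have hpoly : |2 * Real.cos x ^ 4 - (5 * q + 12) * Real.sin x ^ 2 * Real.cos x ^ 2 +
      (q + 2) * (q + 1) * Real.sin x ^ 4| ≤ 192 * Real.exp v := by
    have hexp := Real.quadratic_le_exp_of_nonneg hv0
    have h₁ : 0 ≤ 2 * Real.cos x ^ 4 := by positivity
    have h₂ : 0 ≤ (5 * q + 12) * Real.sin x ^ 2 * Real.cos x ^ 2 := by positivity
    have h₃ : 0 ≤ (q + 2) * (q + 1) * Real.sin x ^ 4 := by positivity
    rw [abs_le]
    constructor <;> nlinarith
  rw [sinSqCosPowDeriv2, abs_mul, abs_pow]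
  calc _ ≤ 192 * Real.exp v * Real.exp (-(2 * v)) := by gcongr
    _ = 192 * Real.exp (-v) := by rw [mul_assoc, ← Real.exp_add]; ring_nf

lemma integral_abs_sinSqCosPowDeriv2_le {q : ℕ} (hq : 1 ≤ q) :
    ∫ x in 0..2 * π, |sinSqCosPowDeriv2 q x| ≤ 384 * π * √(π / q) := by
  have hq0 : (0 : ℝ) < q / 4 := by positivity
  calc ∫ x in 0..2 * π, |sinSqCosPowDeriv2 q x|
      ≤ ∫ x in 0..2 * π, 192 * Real.exp (-(q / 4 * Real.sin x ^ 2)) :=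
        intervalIntegral.integral_mono_on (by positivity)
          (Continuous.intervalIntegrable (by unfold sinSqCosPowDeriv2; fun_prop) _ _)
          (Continuous.intervalIntegrable (by fun_prop) _ _)
          fun x _ => abs_sinSqCosPowDeriv2_le hq x
    _ ≤ 192 * (π * √(π / (q / 4))) := by
        rw [intervalIntegral.integral_const_mul]
        gcongr
        exact integral_exp_neg_mul_sin_sq_le hq0
    _ = 384 * π * √(π / q) := by
        rw [show π / (q / 4 : ℝ) = 2 ^ 2 * (π / q) by field_simp; norm_num,
          Real.sqrt_mul (by norm_num), Real.sqrt_sq (by norm_num)]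
        ring

lemma abs_altSum_le_inv {M q : ℕ} (hM : M ≠ 0) (hq : 1 ≤ q) :
    |altSum M (q + 2)| ≤ 96 * π ^ 2 * √(π / q) / M := by
  have hperiod : 2 * M * (π / M) = 2 * π := by field_simp
  have hneg : altSum M (q + 2) = -∑ k ∈ Finset.range (2 * M),
      (-1) ^ k * (Real.sin (k * (π / M)) ^ 2 * Real.cos (k * (π / M)) ^ (q + 2)) := by
    rw [altSum, ← Finset.sum_neg_distrib]
    refine Finset.sum_congr rfl fun k _ => ?_
    rw [show node M k = k * (π / M) by unfold node; ring]
    ring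
  rw [hneg, abs_neg]
  refine (abs_alternating_sum_le_integral_abs_deriv2
    (f := fun x => Real.sin x ^ 2 * Real.cos x ^ (q + 2)) (by positivity)
    (fun x => by simp [hperiod]) (fun x => by simp [sinSqCosPowDeriv2, hperiod])
    (hasDerivAt_sin_sq_mul_cos_pow q) (hasDerivAt_sinSqCosPow_deriv q)
    (by unfold sinSqCosPowDeriv2; fun_prop)).trans ?_
  rw [hperiod]
  calc π / M / 4 * ∫ x in 0..2 * π, |sinSqCosPowDeriv2 q x|
      ≤ π / M / 4 * (384 * π * √(π / q)) := by
        gcongr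
        exact integral_abs_sinSqCosPowDeriv2_le hq
    _ = 96 * π ^ 2 * √(π / q) / M := by ring

lemma abs_normalizedTerm_le_div_sq {N M : ℕ} (hN : 4 ≤ N) (hM0 : M ≠ 0) (hM : M ≤ N + 1) :
    |normalizedTerm N M| ≤ 192 * π ^ 2 * √π * (√N / M ^ 2) := by
  obtain ⟨q, hq⟩ : ∃ q, 2 * N - M = q + 2 := ⟨2 * N - M - 2, by omega⟩
  have hqN : (N : ℝ) / 4 ≤ q := by
    rw [div_le_iff₀ four_pos]
    exact_mod_cast (by omega : N ≤ q * 4)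
  have hsqrt : √(π / q) ≤ 2 * √π / √N := by
    calc √(π / q) ≤ √(2 ^ 2 * π / N) := by
          refine Real.sqrt_le_sqrt ?_
          calc π / q ≤ π / (N / 4) := by gcongr
            _ = 2 ^ 2 * π / N := by field_simp; norm_num
      _ = 2 * √π / √N := by
          rw [Real.sqrt_div (by positivity), Real.sqrt_mul (by positivity), Real.sqrt_sq two_pos.le]
  rw [normalizedTerm, hq, abs_mul, abs_of_nonneg (by positivity)]
  calc N / M * |altSum M (q + 2)| ≤ N / M * (96 * π ^ 2 * (2 * √π / √N) / M) := by
        gcongr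
        exact (abs_altSum_le_inv hM0 (by omega)).trans (by gcongr)
    _ = 192 * π ^ 2 * √π * (N / √N / M ^ 2) := by ring
    _ = 192 * π ^ 2 * √π * (√N / M ^ 2) := by rw [Real.div_sqrt]

/-! ### The scaling limit `M ≈ t √N` -/

section Limits

variable {ι : Type*} {l : Filter ι}

lemma tendsto_pow_exp_of_tendsto_mul_sub_one {a : ι → ℝ} {n : ι → ℕ} {y : ℝ}
    (ha : Tendsto a l (𝓝 1)) (hn : Tendsto (fun i => n i * (a i - 1)) l (𝓝 y)) :
    Tendsto (fun i => a i ^ n i) l (𝓝 (Real.exp y)) := by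
  have hslope : Tendsto (fun i => dslope Real.log 1 (a i)) l (𝓝 1) := by
    have hcont := continuousAt_dslope_same.2 (Real.differentiableAt_log one_ne_zero)
    simpa only [dslope_same, Real.deriv_log, inv_one, Function.comp_def] using hcont.tendsto.comp ha
  have hexp : Tendsto (fun i => Real.exp (n i * (a i - 1) * dslope Real.log 1 (a i))) l
      (𝓝 (Real.exp y)) := by
    simpa only [mul_one, Function.comp_def] using
      (Real.continuous_exp.tendsto _).comp (hn.mul hslope)
  refine hexp.congr' ?_
  filter_upwards [ha.eventually_const_lt one_pos] with i hi
  have hlog := sub_smul_dslope Real.log 1 (a i)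
  rw [smul_eq_mul, Real.log_one, sub_zero] at hlog
  rw [mul_assoc, hlog, Real.exp_nat_mul, Real.exp_log hi]

lemma tendsto_mul_sin {c θ : ι → ℝ} {x : ℝ} (hθ : Tendsto θ l (𝓝 0))
    (hc : Tendsto (fun i => c i * θ i) l (𝓝 x)) :
    Tendsto (fun i => c i * Real.sin (θ i)) l (𝓝 x) := by
  have hsinc : Tendsto (fun i => Real.sinc (θ i)) l (𝓝 1) := by
    simpa only [Real.sinc_zero, Function.comp_def] using
      (Real.continuous_sinc.tendsto 0).comp hθ
  have hsin (y : ℝ) : y * Real.sinc y = Real.sin y := by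
    rcases eq_or_ne y 0 with rfl | hy
    · rw [zero_mul, Real.sin_zero]
    · rw [Real.sinc_of_ne_zero hy, mul_div_cancel₀ _ hy]
  simpa only [mul_one, mul_assoc, hsin] using hc.mul hsinc

lemma tendsto_cos_pow {n : ι → ℕ} {θ : ι → ℝ} {y : ℝ} (hθ : Tendsto θ l (𝓝 0))
    (hn : Tendsto (fun i => n i * θ i ^ 2) l (𝓝 y)) :
    Tendsto (fun i => Real.cos (θ i) ^ n i) l (𝓝 (Real.exp (-(y / 2)))) := by
  have hcos : Tendsto (fun i => Real.cos (θ i)) l (𝓝 1) := by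
    simpa only [Real.cos_zero, Function.comp_def] using
      (Real.continuous_cos.tendsto 0).comp hθ
  refine tendsto_pow_exp_of_tendsto_mul_sub_one hcos ?_
  have hhalf : Tendsto (fun i => θ i / 2) l (𝓝 0) := by simpa only [zero_div] using hθ.div_const 2
  have hsq : Tendsto (fun i => n i * θ i / 2 * (θ i / 2)) l (𝓝 (y / 4)) :=
    (hn.div_const 4).congr fun i => by ring
  have hsin : Tendsto (fun i => n i * Real.sin (θ i / 2) ^ 2) l (𝓝 (y / 4)) := by
    have hfst := tendsto_mul_sin hhalf hsq
    refine (tendsto_mul_sin (c := fun i => n i * Real.sin (θ i / 2)) hhalf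
      (hfst.congr fun i => by ring)).congr fun i => by ring
  convert hsin.const_mul (-2) using 2 with i
  · rw [Real.sin_sq_eq_half_sub, mul_div_cancel₀ _ two_ne_zero]
    ring
  · ring

end Limits

/-- The height `M` at the scaled position `t = M / √N`. -/
noncomputable def scaledHeight (t : ℝ) (N : ℕ) : ℕ := ⌈t * √N⌉₊

/-- The limit of the `j`-th folded term of `√N · normalizedTerm N M` at `M ≈ t √N`. -/
noncomputable def densityTerm (j : ℕ) (t : ℝ) : ℝ :=
  4 / t * ((-1) ^ j * ((π * (j + 1) / t) ^ 2 * Real.exp (-(π * (j + 1) / t) ^ 2)))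

/-- The limiting density, in `t = M / √N`, of the contributions of the heights to
`W_N · 2N / 4 ^ N`. -/
noncomputable def density (t : ℝ) : ℝ := ∑' j, densityTerm j t

lemma tendsto_sqrt_natCast_atTop : Tendsto (fun N : ℕ => √(N : ℝ)) atTop atTop :=
  Real.tendsto_sqrt_atTop.comp tendsto_natCast_atTop_atTop

section ScaledHeight

variable {t : ℝ}

lemma tendsto_scaledHeight_div_sqrt (ht : 0 < t) :
    Tendsto (fun N : ℕ => (scaledHeight t N : ℝ) / √N) atTop (𝓝 t) :=
  (tendsto_nat_ceil_mul_div_atTop ht.le).comp tendsto_sqrt_natCast_atTop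

lemma tendsto_mul_sqrt_div_scaledHeight (ht : 0 < t) (c : ℝ) :
    Tendsto (fun N : ℕ => c * √N / scaledHeight t N) atTop (𝓝 (c / t)) := by
  have hdiv := tendsto_const_nhds.div (tendsto_scaledHeight_div_sqrt ht) ht.ne' (a := c)
  exact hdiv.congr fun N => div_div_eq_mul_div _ _ _

lemma tendsto_scaledHeight_atTop (ht : 0 < t) : Tendsto (scaledHeight t) atTop atTop :=
  tendsto_nat_ceil_atTop.comp (tendsto_sqrt_natCast_atTop.const_mul_atTop ht)

lemma eventually_scaledHeight_le (t : ℝ) : ∀ᶠ N in atTop, scaledHeight t N ≤ N + 1 := by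
  filter_upwards [tendsto_sqrt_natCast_atTop.eventually_ge_atTop t] with N hN
  refine Nat.ceil_le.2 ?_
  calc t * √N ≤ √N * √N := by gcongr
    _ = N := Real.mul_self_sqrt N.cast_nonneg
    _ ≤ (N + 1 : ℕ) := by exact_mod_cast N.le_succ

lemma tendsto_exponent_div (ht : 0 < t) :
    Tendsto (fun N : ℕ => ((2 * N - scaledHeight t N : ℕ) : ℝ) / N) atTop (𝓝 2) := by
  have hratio : Tendsto (fun N : ℕ => 2 - (scaledHeight t N : ℝ) / √N / √N) atTop (𝓝 (2 - 0)) :=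
    tendsto_const_nhds.sub
      ((tendsto_scaledHeight_div_sqrt ht).div_atTop tendsto_sqrt_natCast_atTop)
  rw [sub_zero] at hratio
  refine hratio.congr' ?_
  filter_upwards [eventually_scaledHeight_le t, eventually_ge_atTop 1] with N hM hN
  have hN0 : (N : ℝ) ≠ 0 := by positivity
  rw [div_div, Real.mul_self_sqrt N.cast_nonneg, Nat.cast_sub (by omega), sub_div]
  push_cast
  rw [mul_div_cancel_right₀ _ hN0]

lemma tendsto_node_scaledHeight (ht : 0 < t) (k : ℕ) :
    Tendsto (fun N => node (scaledHeight t N) k) atTop (𝓝 0) :=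
  (tendsto_natCast_atTop_atTop.comp (tendsto_scaledHeight_atTop ht)).const_div_atTop _

lemma tendsto_sqrt_mul_node_scaledHeight (ht : 0 < t) (k : ℕ) :
    Tendsto (fun N : ℕ => √N * node (scaledHeight t N) k) atTop (𝓝 (π * k / t)) :=
  (tendsto_mul_sqrt_div_scaledHeight ht (π * k)).congr fun N => by
    rw [node]
    ring

lemma tendsto_cos_node_scaledHeight_pow (ht : 0 < t) (k : ℕ) :
    Tendsto (fun N => Real.cos (node (scaledHeight t N) k) ^ (2 * N - scaledHeight t N)) atTop
      (𝓝 (Real.exp (-(π * k / t) ^ 2))) := by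
  have hsq := (tendsto_exponent_div ht).mul ((tendsto_sqrt_mul_node_scaledHeight ht k).pow 2)
  convert tendsto_cos_pow (tendsto_node_scaledHeight ht k) (hsq.congr' ?_) using 3
  · ring
  · filter_upwards [eventually_ge_atTop 1] with N hN
    have hN0 : (N : ℝ) ≠ 0 := by positivity
    rw [mul_pow, Real.sq_sqrt N.cast_nonneg]
    field_simp

lemma tendsto_foldedTerm (ht : 0 < t) (j : ℕ) :
    Tendsto (fun N : ℕ => √N * (N / scaledHeight t N *
      foldedTerm (scaledHeight t N) (2 * N - scaledHeight t N) j)) atTop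
      (𝓝 (densityTerm j t)) := by
  have hfactor := tendsto_mul_sqrt_div_scaledHeight ht 4
  have hsin := (tendsto_mul_sin (tendsto_node_scaledHeight ht (j + 1))
    (tendsto_sqrt_mul_node_scaledHeight ht (j + 1))).pow 2
  have hcos := tendsto_cos_node_scaledHeight_pow ht (j + 1)
  have hlim := hfactor.mul ((hsin.mul hcos).const_mul ((-1) ^ j))
  rw [Nat.cast_succ] at hlim
  refine hlim.congr' ?_
  filter_upwards [(tendsto_scaledHeight_atTop ht).eventually_gt_atTop (2 * (j + 1))] with N hM
  rw [foldedTerm, if_pos hM, mul_pow, Real.sq_sqrt N.cast_nonneg]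
  field_simp

lemma tendsto_sqrt_mul_normalizedTerm (ht : 0 < t) :
    Tendsto (fun N : ℕ => √N * normalizedTerm N (scaledHeight t N)) atTop (𝓝 (density t)) := by
  have hsum : Tendsto (fun N : ℕ => ∑' j, √N * (N / scaledHeight t N *
      foldedTerm (scaledHeight t N) (2 * N - scaledHeight t N) j)) atTop (𝓝 (density t)) := by
    refine tendsto_tsum_of_dominated_convergence
      (bound := fun j : ℕ => 8 * π ^ 2 * (t + 1) * (1 / ((j + 1 : ℕ) : ℝ) ^ 2))
      (hasSum_one_div_succ_sq.summable.mul_left _) (tendsto_foldedTerm ht) ?_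
    filter_upwards [eventually_scaledHeight_le t, eventually_ge_atTop 2,
      (tendsto_scaledHeight_div_sqrt ht).eventually_le_const (lt_add_one t)] with N hM hN hratio j
    rw [Real.norm_eq_abs, abs_mul, abs_of_nonneg (by positivity : 0 ≤ √(N : ℝ))]
    set M := scaledHeight t N
    calc √N * |N / M * foldedTerm M (2 * N - M) j|
        ≤ √N * (8 * π ^ 2 * (M / N) * (1 / (j + 1 : ℕ) ^ 2)) := by
          gcongr
          exact abs_div_mul_foldedTerm_le hN hM j
      _ = 8 * π ^ 2 * (M * (√N / N)) * (1 / (j + 1 : ℕ) ^ 2) := by ring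
      _ ≤ 8 * π ^ 2 * (t + 1) * (1 / (j + 1 : ℕ) ^ 2) := by
          rw [Real.sqrt_div_self', mul_one_div (M : ℝ)]
          gcongr
  refine hsum.congr' ?_
  filter_upwards [eventually_scaledHeight_le t, eventually_ge_atTop 2] with N hM hN
  rw [tsum_mul_left, (hasSum_normalizedTerm hN hM).tsum_eq]

end ScaledHeight

/-! ### The total mass of the limiting density -/

/-- The primitive `1 - ∑_{n ∈ ℤ} (-1) ^ n exp (-(π n / t) ^ 2)` of the limiting density. -/
noncomputable def cumulative (t : ℝ) : ℝ := 1 - HurwitzZeta.cosKernel (1 / 2 : ℝ) (π / t ^ 2)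

/-- The `j`-th term, pairing `n = ± (j + 1)`, of the series for `cumulative t`. -/
noncomputable def cumulativeTerm (j : ℕ) (t : ℝ) : ℝ :=
  2 * (-1) ^ j * Real.exp (-(π * (j + 1) / t) ^ 2)

lemma hasSum_cumulativeTerm {t : ℝ} (ht : 0 < t) :
    HasSum (fun j => cumulativeTerm j t) (cumulative t) := by
  have hker := (HurwitzZeta.hasSum_nat_cosKernel₀ (1 / 2) (t := π / t ^ 2) (by positivity)).neg
  rw [neg_sub] at hker
  refine hker.congr_fun fun j => ?_
  have hcos : Real.cos (2 * π * (1 / 2) * (j + 1)) = -(-1) ^ j := by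
    rw [show 2 * π * (1 / 2) * ((j : ℝ) + 1) = (j + 1 : ℕ) * π by push_cast; ring,
      Real.cos_nat_mul_pi, pow_succ, mul_neg_one]
  rw [hcos, cumulativeTerm, show -(π * (j + 1) / t) ^ 2 = -π * (j + 1) ^ 2 * (π / t ^ 2) by ring]
  ring

lemma hasDerivAt_cumulativeTerm (j : ℕ) {t : ℝ} (ht : t ≠ 0) :
    HasDerivAt (cumulativeTerm j) (densityTerm j t) t := by
  have hinner : HasDerivAt (fun s => -(π * (j + 1) / s) ^ 2) (2 * (π * (j + 1) / t) ^ 2 / t) t := by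
    simp only [div_eq_mul_inv]
    refine (((hasDerivAt_inv ht).const_mul (π * (j + 1))).fun_pow 2).fun_neg.congr_deriv ?_
    simp only [Nat.cast_ofNat, Nat.reduceSub, pow_one]
    field_simp
  refine (hinner.exp.const_mul (2 * (-1) ^ j)).congr_deriv ?_
  rw [densityTerm]
  ring

lemma abs_densityTerm_le (j : ℕ) {t : ℝ} (ht : 0 < t) :
    |densityTerm j t| ≤ 8 / π ^ 2 * t * (1 / ((j + 1 : ℕ) : ℝ) ^ 2) := by
  have hexp := exp_neg_le_two_div_sq (y := (π * (j + 1) / t) ^ 2) (by positivity)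
  rw [densityTerm, abs_mul, abs_mul, abs_neg_one_pow, one_mul, abs_of_nonneg (by positivity),
    abs_of_nonneg (by positivity)]
  calc 4 / t * ((π * (j + 1) / t) ^ 2 * Real.exp (-(π * (j + 1) / t) ^ 2))
      ≤ 4 / t * ((π * (j + 1) / t) ^ 2 * (2 / ((π * (j + 1) / t) ^ 2) ^ 2)) := by gcongr
    _ = 8 / π ^ 2 * t * (1 / ((j + 1 : ℕ) : ℝ) ^ 2) := by
        push_cast
        field_simp
        norm_num

lemma hasDerivAt_cumulative {t : ℝ} (ht : 0 < t) : HasDerivAt cumulative (density t) t := by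
  have hseries : HasDerivAt (fun s => ∑' j, cumulativeTerm j s) (density t) t := by
    refine hasDerivAt_tsum_of_isPreconnected (t := Set.Ioo 0 (t + 1)) (y₀ := t)
      (u := fun j : ℕ => 8 / π ^ 2 * (t + 1) * (1 / ((j + 1 : ℕ) : ℝ) ^ 2))
      (hasSum_one_div_succ_sq.summable.mul_left _) isOpen_Ioo isPreconnected_Ioo
      (fun j s hs => hasDerivAt_cumulativeTerm j hs.1.ne') (fun j s hs => ?_)
      ⟨ht, lt_add_one t⟩ (hasSum_cumulativeTerm ht).summable ⟨ht, lt_add_one t⟩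
    refine (abs_densityTerm_le j hs.1).trans ?_
    gcongr
    exact hs.2.le
  refine hseries.congr_of_eventuallyEq ?_
  filter_upwards [Ioi_mem_nhds ht] with s hs
  exact (hasSum_cumulativeTerm hs).tsum_eq.symm

lemma tendsto_cosKernel_atTop (a : UnitAddCircle) :
    Tendsto (HurwitzZeta.cosKernel a) atTop (𝓝 1) := by
  obtain ⟨p, hp, hbound⟩ := HurwitzZeta.isBigO_atTop_cosKernel_sub a
  have hexp : Tendsto (fun x => Real.exp (-p * x)) atTop (𝓝 0) :=
    Real.tendsto_exp_atBot.comp (tendsto_id.const_mul_atTop_of_neg (neg_neg_of_pos hp))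
  simpa only [sub_add_cancel, zero_add] using (hbound.trans_tendsto hexp).add_const 1

lemma cosKernel_eq_evenKernel (a : UnitAddCircle) {x : ℝ} (hx : 0 < x) :
    HurwitzZeta.cosKernel a x = (1 / x) ^ (1 / 2 : ℝ) * HurwitzZeta.evenKernel a (1 / x) := by
  rw [HurwitzZeta.evenKernel_functional_equation, one_div_one_div]
  have hpow : (1 / x) ^ (1 / 2 : ℝ) ≠ 0 := by positivity
  field_simp

lemma tendsto_cosKernel_nhdsGT_zero {a : UnitAddCircle} (ha : a ≠ 0) :
    Tendsto (HurwitzZeta.cosKernel a) (𝓝[>] 0) (𝓝 0) := by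
  obtain ⟨p, hp, hbound⟩ := HurwitzZeta.isBigO_atTop_evenKernel_sub a
  simp only [if_neg ha, sub_zero] at hbound
  have hdecay : Tendsto (fun y => y ^ (1 / 2 : ℝ) * HurwitzZeta.evenKernel a y) atTop (𝓝 0) := by
    have hprod := (Asymptotics.isBigO_refl (fun y : ℝ => y ^ (1 / 2 : ℝ)) atTop).mul hbound
    exact hprod.trans_tendsto (tendsto_rpow_mul_exp_neg_mul_atTop_nhds_zero (1 / 2) p hp)
  refine (hdecay.comp tendsto_inv_nhdsGT_zero).congr' ?_
  filter_upwards [self_mem_nhdsWithin] with x hx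
  rw [cosKernel_eq_evenKernel a hx, Function.comp_apply, one_div x]

lemma tendsto_cumulative_nhdsGT_zero : Tendsto cumulative (𝓝[>] 0) (𝓝 0) := by
  have harg : Tendsto (fun t : ℝ => π / t ^ 2) (𝓝[>] 0) atTop := by
    have hinv : Tendsto (fun t : ℝ => t⁻¹ ^ 2) (𝓝[>] 0) atTop :=
      (tendsto_pow_atTop two_ne_zero).comp tendsto_inv_nhdsGT_zero
    exact (hinv.const_mul_atTop Real.pi_pos).congr fun t => by rw [inv_pow, div_eq_mul_inv]
  have hlim := ((tendsto_cosKernel_atTop (1 / 2 : ℝ)).comp harg).const_sub 1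
  rwa [sub_self] at hlim

lemma tendsto_cumulative_atTop : Tendsto cumulative atTop (𝓝 1) := by
  have harg : Tendsto (fun t : ℝ => π / t ^ 2) atTop (𝓝[>] 0) := by
    refine tendsto_nhdsWithin_iff.2 ⟨(tendsto_pow_atTop two_ne_zero).const_div_atTop π, ?_⟩
    filter_upwards [eventually_gt_atTop 0] with t ht
    exact div_pos Real.pi_pos (pow_pos ht 2)
  have hhalf : ((1 / 2 : ℝ) : UnitAddCircle) ≠ 0 := by
    rw [Ne, AddCircle.coe_eq_zero_iff_of_mem_Ico (by norm_num)]
    norm_num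
  have hlim := ((tendsto_cosKernel_nhdsGT_zero hhalf).comp harg).const_sub 1
  rwa [sub_zero] at hlim

lemma integral_Ioi_of_hasDerivAt_of_tendsto_nhdsGT {E : Type*} [NormedAddCommGroup E]
    [NormedSpace ℝ E] [CompleteSpace E] {f f' : ℝ → E} {a : ℝ} {b c : E}
    (hderiv : ∀ x ∈ Set.Ioi a, HasDerivAt f (f' x) x) (hint : IntegrableOn f' (Set.Ioi a))
    (hb : Tendsto f (𝓝[>] a) (𝓝 b)) (hc : Tendsto f atTop (𝓝 c)) :
    ∫ x in Set.Ioi a, f' x = c - b := by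
  have heq : Set.EqOn (Function.update f a b) f (Set.Ioi a) := fun x hx =>
    Function.update_of_ne (ne_of_gt hx) _ _
  have hcont : ContinuousWithinAt (Function.update f a b) (Set.Ici a) a := by
    rwa [continuousWithinAt_update_same, Set.Ici_sdiff_left]
  have hderiv' (x : ℝ) (hx : x ∈ Set.Ioi a) : HasDerivAt (Function.update f a b) (f' x) x :=
    (hderiv x hx).congr_of_eventuallyEq (heq.eventuallyEq_of_mem (Ioi_mem_nhds hx))
  have hc' : Tendsto (Function.update f a b) atTop (𝓝 c) :=
    hc.congr' (heq.symm.eventuallyEq_of_mem (Ioi_mem_atTop a))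
  rw [integral_Ioi_of_hasDerivAt_of_tendsto hcont hderiv' hint hc', Function.update_self]

lemma integral_density (hint : IntegrableOn density (Set.Ioi 0)) :
    ∫ t in Set.Ioi 0, density t = 1 := by
  rw [integral_Ioi_of_hasDerivAt_of_tendsto_nhdsGT (fun t ht => hasDerivAt_cumulative ht) hint
    tendsto_cumulative_nhdsGT_zero tendsto_cumulative_atTop, sub_zero]

/-! ### Sums as integrals of step functions -/

section StepFunction

variable {E : Type*} [NormedAddCommGroup E] [NormedSpace ℝ E]

/-- The step function on `(0, ∞)` equal to `r • u M` on `((M - 1) / r, M / r]` for `M ∈ s` and to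
`0` elsewhere; its integral is `∑ M ∈ s, u M`. -/
noncomputable def stepFunction (r : ℝ) (s : Finset ℕ) (u : ℕ → E) (t : ℝ) : E :=
  r • (s : Set ℕ).indicator u ⌈t * r⌉₊

lemma stepFunction_of_mem {r t : ℝ} {s : Finset ℕ} (u : ℕ → E) (h : ⌈t * r⌉₊ ∈ s) :
    stepFunction r s u t = r • u ⌈t * r⌉₊ := by
  rw [stepFunction, Set.indicator_of_mem (Finset.mem_coe.2 h)]

lemma stepFunction_of_notMem {r t : ℝ} {s : Finset ℕ} (u : ℕ → E) (h : ⌈t * r⌉₊ ∉ s) :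
    stepFunction r s u t = 0 := by
  rw [stepFunction, Set.indicator_of_notMem (mt Finset.mem_coe.1 h), smul_zero]

lemma aestronglyMeasurable_stepFunction (r : ℝ) (s : Finset ℕ) (u : ℕ → E) (μ : Measure ℝ) :
    AEStronglyMeasurable (stepFunction r s u) μ := by
  have hceil : Measurable fun t : ℝ => ⌈t * r⌉₊ :=
    Nat.measurable_ceil.comp (measurable_id.mul_const r)
  have hind : StronglyMeasurable ((s : Set ℕ).indicator u) := .of_discrete
  exact ((hind.comp_measurable hceil).const_smul r).aestronglyMeasurable

lemma integral_Ioi_indicator_ceil [CompleteSpace E] {s : Finset ℕ} (hs : 0 ∉ s) (u : ℕ → E) :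
    ∫ x in Set.Ioi (0 : ℝ), (s : Set ℕ).indicator u ⌈x⌉₊ = ∑ M ∈ s, u M := by
  have hpos {M : ℕ} (hM : M ∈ s) : M ≠ 0 := fun h => hs (h ▸ hM)
  have hsum (x : ℝ) : (s : Set ℕ).indicator u ⌈x⌉₊ =
      ∑ M ∈ s, (Set.Ioc ((M - 1 : ℕ) : ℝ) M).indicator (fun _ => u M) x := by
    classical
    have hterm (M : ℕ) (hM : M ∈ s) : (Set.Ioc ((M - 1 : ℕ) : ℝ) M).indicator (fun _ => u M) x =
        if ⌈x⌉₊ = M then u M else 0 := by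
      simp only [Set.indicator_apply, Nat.ceil_eq_iff (hpos hM), Set.mem_Ioc]
    rw [Finset.sum_congr rfl hterm, Finset.sum_ite_eq]
    simp only [Set.indicator_apply, Finset.mem_coe]
  have hintegrable (M : ℕ) :
      Integrable ((Set.Ioc ((M - 1 : ℕ) : ℝ) M).indicator fun _ => u M) :=
    (integrableOn_const (by simp)).integrable_indicator measurableSet_Ioc
  simp only [hsum]
  rw [integral_finsetSum _ fun M _ => (hintegrable M).integrableOn]
  refine Finset.sum_congr rfl fun M hM => ?_
  have hsubset : Set.Ioc ((M - 1 : ℕ) : ℝ) M ⊆ Set.Ioi 0 := fun x hx =>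
    (Nat.cast_nonneg (M - 1)).trans_lt hx.1
  rw [setIntegral_indicator measurableSet_Ioc, Set.inter_eq_right.2 hsubset, setIntegral_const,
    Real.volume_real_Ioc, Nat.cast_pred (Nat.pos_of_ne_zero (hpos hM)), sub_sub_cancel,
    max_eq_left zero_le_one, one_smul]

lemma integral_stepFunction [CompleteSpace E] {r : ℝ} (hr : 0 < r) {s : Finset ℕ} (hs : 0 ∉ s)
    (u : ℕ → E) : ∫ t in Set.Ioi 0, stepFunction r s u t = ∑ M ∈ s, u M := by
  simp only [stepFunction]
  rw [integral_smul, integral_comp_mul_right_Ioi (fun x => (s : Set ℕ).indicator u ⌈x⌉₊) 0 hr,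
    zero_mul, integral_Ioi_indicator_ceil hs, smul_inv_smul₀ hr.ne']

variable {ι : Type*} {l : Filter ι} [l.IsCountablyGenerated]
  {r : ι → ℝ} {s : ι → Finset ℕ} {u : ι → ℕ → E} {ρ : ℝ → E} {g : ℝ → ℝ}

lemma integrableOn_of_tendsto_stepFunction [l.NeBot]
    (hlim : ∀ t > 0, Tendsto (fun i => stepFunction (r i) (s i) (u i) t) l (𝓝 (ρ t)))
    (hbound : ∀ᶠ i in l, ∀ t > 0, ‖stepFunction (r i) (s i) (u i) t‖ ≤ g t)
    (hg : IntegrableOn g (Set.Ioi 0)) : IntegrableOn ρ (Set.Ioi 0) := by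
  have hmeas : AEStronglyMeasurable ρ (volume.restrict (Set.Ioi 0)) :=
    aestronglyMeasurable_of_tendsto_ae l (fun i => aestronglyMeasurable_stepFunction _ _ _ _)
      (ae_restrict_of_forall_mem measurableSet_Ioi hlim)
  exact hg.mono' hmeas <| ae_restrict_of_forall_mem measurableSet_Ioi fun t ht =>
    le_of_tendsto (hlim t ht).norm (hbound.mono fun i hi => hi t ht)

lemma tendsto_sum_of_tendsto_stepFunction [CompleteSpace E] (hr : ∀ᶠ i in l, 0 < r i)
    (hs : ∀ i, 0 ∉ s i)
    (hlim : ∀ t > 0, Tendsto (fun i => stepFunction (r i) (s i) (u i) t) l (𝓝 (ρ t)))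
    (hbound : ∀ᶠ i in l, ∀ t > 0, ‖stepFunction (r i) (s i) (u i) t‖ ≤ g t)
    (hg : IntegrableOn g (Set.Ioi 0)) :
    Tendsto (fun i => ∑ M ∈ s i, u i M) l (𝓝 (∫ t in Set.Ioi 0, ρ t)) := by
  have hint := tendsto_integral_filter_of_dominated_convergence g
    (.of_forall fun i => aestronglyMeasurable_stepFunction _ _ _ _)
    (hbound.mono fun i hi => ae_restrict_of_forall_mem measurableSet_Ioi hi) hg
    (ae_restrict_of_forall_mem measurableSet_Ioi hlim)
  exact hint.congr' (hr.mono fun i hi => integral_stepFunction hi (hs i) (u i))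

end StepFunction

/-! ### Domination and conclusion -/

lemma le_mul_inv_one_add_sq {x a b t : ℝ} (ha : 0 ≤ a) (hb : 0 ≤ b) (ht : 0 < t)
    (hat : x ≤ a * t) (hbt : x ≤ b / t ^ 2) : x ≤ 2 * (a + b) * (1 + t ^ 2)⁻¹ := by
  rw [← div_eq_mul_inv, le_div_iff₀ (by positivity)]
  rcases le_total t 1 with ht1 | ht1
  · calc x * (1 + t ^ 2) ≤ a * t * (1 + t ^ 2) := by gcongr
      _ ≤ a * 1 * (1 + 1 ^ 2) := by gcongr
      _ ≤ 2 * (a + b) := by linarith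
  · calc x * (1 + t ^ 2) ≤ b / t ^ 2 * (t ^ 2 + t ^ 2) := by
          gcongr
          exact one_le_pow₀ ht1
      _ = 2 * b := by field_simp; ring
      _ ≤ 2 * (a + b) := by linarith

section Domination

variable {N : ℕ} {t : ℝ}

lemma sqrt_mul_abs_normalizedTerm_le_linear (hN : 2 ≤ N) (ht : 0 < t) (hM : 2 ≤ scaledHeight t N)
    (hMN : scaledHeight t N ≤ N + 1) :
    √N * |normalizedTerm N (scaledHeight t N)| ≤ 8 * π ^ 4 / 3 * t := by
  have hceil : (scaledHeight t N : ℝ) < t * √N + 1 := Nat.ceil_lt_add_one (by positivity)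
  have hM' : (2 : ℝ) ≤ scaledHeight t N := by exact_mod_cast hM
  have hN0 : (0 : ℝ) < N := by positivity
  calc √N * |normalizedTerm N (scaledHeight t N)|
      ≤ √N * (4 * π ^ 4 / 3 * (scaledHeight t N / N)) := by
        gcongr
        exact abs_normalizedTerm_le_div hN hMN
    _ ≤ √N * (4 * π ^ 4 / 3 * (2 * (t * √N) / N)) := by
        gcongr
        linarith
    _ = 8 * π ^ 4 / 3 * t * (√N * √N / N) := by ring
    _ = 8 * π ^ 4 / 3 * t := by
        rw [Real.mul_self_sqrt hN0.le, div_self hN0.ne', mul_one]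

lemma sqrt_mul_abs_normalizedTerm_le_inv_sq (hN : 4 ≤ N) (ht : 0 < t)
    (hMN : scaledHeight t N ≤ N + 1) :
    √N * |normalizedTerm N (scaledHeight t N)| ≤ 192 * π ^ 2 * √π / t ^ 2 := by
  have hceil : t * √N ≤ scaledHeight t N := Nat.le_ceil _
  have hM0 : scaledHeight t N ≠ 0 := (Nat.ceil_pos.2 (by positivity)).ne'
  calc √N * |normalizedTerm N (scaledHeight t N)|
      ≤ √N * (192 * π ^ 2 * √π * (√N / scaledHeight t N ^ 2)) := by
        gcongr
        exact abs_normalizedTerm_le_div_sq hN hM0 hMN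
    _ ≤ √N * (192 * π ^ 2 * √π * (√N / (t * √N) ^ 2)) := by gcongr
    _ = 192 * π ^ 2 * √π / t ^ 2 := by field_simp

lemma norm_stepFunction_normalizedTerm_le (hN : 4 ≤ N) (ht : 0 < t) :
    ‖stepFunction √N (Finset.Icc 2 (N + 1)) (normalizedTerm N) t‖ ≤
      2 * (8 * π ^ 4 / 3 + 192 * π ^ 2 * √π) * (1 + t ^ 2)⁻¹ := by
  by_cases hmem : scaledHeight t N ∈ Finset.Icc 2 (N + 1)
  · obtain ⟨hM, hMN⟩ := Finset.mem_Icc.1 hmem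
    rw [stepFunction_of_mem _ hmem, norm_smul, Real.norm_of_nonneg (Real.sqrt_nonneg _),
      Real.norm_eq_abs]
    exact le_mul_inv_one_add_sq (by positivity) (by positivity) ht
      (sqrt_mul_abs_normalizedTerm_le_linear (by omega) ht hM hMN)
      (sqrt_mul_abs_normalizedTerm_le_inv_sq hN ht hMN)
  · rw [stepFunction_of_notMem _ hmem, norm_zero]
    positivity

end Domination

lemma tendsto_stepFunction_normalizedTerm {t : ℝ} (ht : 0 < t) :
    Tendsto (fun N : ℕ => stepFunction √N (Finset.Icc 2 (N + 1)) (normalizedTerm N) t) atTop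
      (𝓝 (density t)) := by
  refine (tendsto_sqrt_mul_normalizedTerm ht).congr' ?_
  filter_upwards [(tendsto_scaledHeight_atTop ht).eventually_ge_atTop 2,
    eventually_scaledHeight_le t] with N hM hMN
  exact (stepFunction_of_mem _ (Finset.mem_Icc.2 ⟨hM, hMN⟩)).symm

lemma tendsto_sum_normalizedTerm :
    Tendsto (fun N => ∑ M ∈ Finset.Icc 2 (N + 1), normalizedTerm N M) atTop (𝓝 1) := by
  have hbound : ∀ᶠ N : ℕ in atTop, ∀ t > 0,
      ‖stepFunction √N (Finset.Icc 2 (N + 1)) (normalizedTerm N) t‖ ≤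
        2 * (8 * π ^ 4 / 3 + 192 * π ^ 2 * √π) * (1 + t ^ 2)⁻¹ :=
    (eventually_ge_atTop 4).mono fun N hN t ht => norm_stepFunction_normalizedTerm_le hN ht
  have hg := (integrable_inv_one_add_sq.const_mul
    (2 * (8 * π ^ 4 / 3 + 192 * π ^ 2 * √π))).integrableOn (s := Set.Ioi 0)
  have hlim (t : ℝ) (ht : t > 0) := tendsto_stepFunction_normalizedTerm ht
  rw [← integral_density (integrableOn_of_tendsto_stepFunction hlim hbound hg)]
  exact tendsto_sum_of_tendsto_stepFunction
    (tendsto_sqrt_natCast_atTop.eventually_gt_atTop 0) (fun N => by simp) hlim hbound hg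

end OneSidedTree

/-- At the critical coupling `μ₀ = −ln 2` one has `W_N = (1/(2N))·4^N·(1 + o(1))`, i.e.
`W_N · 2N / 4^N → 1` as `N → ∞`. -/
theorem Wcrit_asymptotics :
    Filter.Tendsto (fun N : ℕ => Wcrit N * (2 * (N : ℂ)) / 4 ^ N) Filter.atTop (𝓝 1) := by
  simp only [OneSidedTree.Wcrit_mul_div_eq_sum_normalizedTerm]
  exact_mod_cast (Complex.continuous_ofReal.tendsto 1).comp OneSidedTree.tendsto_sum_normalizedTerm
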